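/- arXiv:math/0101125 — 7 statements merged into one kernel-verified Lean document; each statement's English description precedes it below -/
import Mathlib

section
/- Let X = {x_0, …, x_M} be M+1 distinct real points and let u, v be positive functions on X with u(x_k)·v(x_k) = 1/∏_{i≠k}(x_k − x_i)² for every k. Let P_0,…,P_M and Q_0,…,Q_M be the orthogonal polynomial systems for the weights u and v respectively, with leading coefficients a_i, b_i and squared norms p_i, q_i, normalized so that b_i = p_{M−i}/a_{M−i} for all i. Then for every i = 0,…,M and every x ∈ X one has P_i(x)·√(u(x)) = ε(x)·Q_{M−i}(x)·√(v(x)), where ε(x_k) = sgn ∏_{i≠k}(x_k − x_i); moreover a_i·b_{M−i} = p_i = q_{M−i} for all i = 0,…,M. -/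
/-!
Write `D k = ∏_{j ≠ k} (x k - x j)`. The first claim amounts to `P i (x k) * u k * D k = Q (M - i) (x k)`.
Call the left side `f i k`. Since `(u D)² v = u`, the `f i` are orthogonal for the weight `v`, with
squared norms `p i`. Since `u D v = 1 / D`, the pairing of `f i` with `Q j` for the weight `v` is
`∑ k, (P i * Q j) (x k) / D k`, which by Lagrange interpolation is the coefficient of degree `M` of
`P i * Q j` when `i + j ≤ M`: it is `0` for `i + j < M` and `a i * b j = p i` for `i + j = M`.
So the matrix of pairings between two orthogonal bases is triangular, hence diagonal, which is
proved by strong induction on `i`; comparing norms shows that the proportionality factor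
between `f i` and `Q (M - i)` is `1`.
-/

/-- Top coefficient of a polynomial of degree at most `M` from its values at `M + 1` nodes. -/
lemma sum_eval_div_eq_coeff (M : ℕ) (x : Fin (M + 1) → ℝ) (hx : Function.Injective x)
    (f : Polynomial ℝ) (hf : f.degree ≤ M) :
    ∑ k, f.eval (x k) / ∏ j ∈ Finset.univ.erase k, (x k - x j) = f.coeff M := by
  have h := Lagrange.coeff_eq_sum (s := Finset.univ) hx.injOn (P := f) (by
    rw [Finset.card_univ, Fintype.card_fin]
    exact hf.trans_lt (by exact_mod_cast Nat.lt_succ_self M))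
  rw [← h, Finset.card_univ, Fintype.card_fin, Nat.add_sub_cancel]

/-- An orthogonal system of full size is complete. -/
lemma eq_zero_of_orthogonal {n : ℕ} (A : Fin n → Fin n → ℝ) (v q g : Fin n → ℝ)
    (hv : ∀ k, 0 < v k) (hq : ∀ i, 0 < q i)
    (hA : ∀ i j, ∑ k, A i k * A j k * v k = if i = j then q i else 0)
    (hg : ∀ j, ∑ k, g k * A j k * v k = 0) : ∀ k, g k = 0 := by
  have hmul : (Matrix.of A) * (Matrix.of fun k j => A j k * v k) = Matrix.diagonal q := by
    ext i j
    simp only [Matrix.mul_apply, Matrix.of_apply, Matrix.diagonal_apply, ← hA i j, mul_assoc]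
  have hdet : (Matrix.of A).det ≠ 0 := by
    intro h
    have := congrArg Matrix.det hmul
    rw [Matrix.det_mul, h, zero_mul, Matrix.det_diagonal] at this
    exact (Finset.prod_pos fun i _ => hq i).ne this
  have h0 := Matrix.eq_zero_of_mulVec_eq_zero hdet (v := fun k => g k * v k) (by
    ext j
    simp only [Matrix.mulVec, dotProduct, Matrix.of_apply, Pi.zero_apply, ← hg j]
    exact Finset.sum_congr rfl fun k _ => by ring)
  intro k
  have := congrFun h0 k
  simpa [(hv k).ne'] using this

/-- **Duality of orthogonal polynomials on a finite set** (Borodin, Theorem 1).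
If `u(x_k) v(x_k) = 1 / ∏_{i ≠ k} (x_k - x_i)^2` and the orthogonal polynomial
systems `P_i` (for `u`) and `Q_i` (for `v`) are normalized so that
`b_i = p_{M-i} / a_{M-i}`, then `P_i(x) √u(x) = ε(x) Q_{M-i}(x) √v(x)` on `X`,
and `a_i b_{M-i} = p_i = q_{M-i}`. -/
theorem duality_orthogonal_polynomials
    (M : ℕ) (x : Fin (M + 1) → ℝ) (hx : Function.Injective x)
    (u v : Fin (M + 1) → ℝ) (hu : ∀ k, 0 < u k) (hv : ∀ k, 0 < v k)
    (huv : ∀ k, u k * v k = 1 / ∏ i ∈ Finset.univ.erase k, (x k - x i) ^ 2)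
    (P Q : Fin (M + 1) → Polynomial ℝ)
    (a b p q : Fin (M + 1) → ℝ)
    (hPdeg : ∀ i, (P i).degree = (i : ℕ))
    (hQdeg : ∀ i, (Q i).degree = (i : ℕ))
    (ha : ∀ i, a i = (P i).coeff i)
    (hb : ∀ i, b i = (Q i).coeff i)
    (hp : ∀ i, 0 < p i) (hq : ∀ i, 0 < q i)
    (hPorth : ∀ i j, ∑ k, (P i).eval (x k) * (P j).eval (x k) * u k
        = if i = j then p i else 0)
    (hQorth : ∀ i j, ∑ k, (Q i).eval (x k) * (Q j).eval (x k) * v k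
        = if i = j then q i else 0)
    (hnorm : ∀ i, b i = p i.rev / a i.rev) :
    (∀ i k, (P i).eval (x k) * Real.sqrt (u k)
        = Real.sign (∏ j ∈ Finset.univ.erase k, (x k - x j))
            * (Q i.rev).eval (x k) * Real.sqrt (v k))
    ∧ (∀ i, a i * b i.rev = p i ∧ p i = q i.rev) := by
  set D : Fin (M + 1) → ℝ := fun k => ∏ j ∈ Finset.univ.erase k, (x k - x j) with hD
  have hD0 : ∀ k, D k ≠ 0 := fun k => Finset.prod_ne_zero_iff.2 fun j hj =>
    sub_ne_zero.2 fun h => (Finset.mem_erase.1 hj).1 (hx h).symm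
  have huvD : ∀ k, u k * v k * D k ^ 2 = 1 := fun k => by
    rw [huv k, Finset.prod_pow]
    exact one_div_mul_cancel (pow_ne_zero 2 (hD0 k))
  have ha0 : ∀ i, a i ≠ 0 := fun i => by
    rw [ha i]
    exact Polynomial.coeff_ne_zero_of_eq_degree (hPdeg i)
  have hab : ∀ i : Fin (M + 1), a i * b i.rev = p i := fun i => by
    rw [hnorm, Fin.rev_rev]
    exact mul_div_cancel₀ _ (ha0 i)
  set f : Fin (M + 1) → Fin (M + 1) → ℝ := fun i k => (P i).eval (x k) * u k * D k with hf
  have hff : ∀ i j, ∑ k, f i k * f j k * v k = if i = j then p i else 0 := fun i j => by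
    rw [← hPorth i j]
    refine Finset.sum_congr rfl fun k _ => ?_
    simp only [hf]
    linear_combination (P i).eval (x k) * (P j).eval (x k) * u k * huvD k
  have hdeg : ∀ i j : Fin (M + 1), (P i * Q j).degree = ((i + j : ℕ) : WithBot ℕ) := fun i j => by
    rw [Polynomial.degree_mul, hPdeg, hQdeg]
    rfl
  have hfQ : ∀ i j : Fin (M + 1), (i : ℕ) + j ≤ M →
      ∑ k, f i k * (Q j).eval (x k) * v k = (P i * Q j).coeff M := fun i j hij => by
    rw [← sum_eval_div_eq_coeff M x hx (P i * Q j) (by rw [hdeg]; exact_mod_cast hij)]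
    refine Finset.sum_congr rfl fun k _ => ?_
    rw [eq_div_iff (hD0 k), Polynomial.eval_mul]
    simp only [hf]
    linear_combination (P i).eval (x k) * (Q j).eval (x k) * huvD k
  have hlt : ∀ i j : Fin (M + 1), (i : ℕ) + j < M →
      ∑ k, f i k * (Q j).eval (x k) * v k = 0 := fun i j hij => by
    rw [hfQ i j hij.le]
    exact Polynomial.coeff_eq_zero_of_degree_lt (by rw [hdeg]; exact_mod_cast hij)
  have hdiag : ∀ i : Fin (M + 1), ∑ k, f i k * (Q i.rev).eval (x k) * v k = p i := fun i => by
    have hi : (i : ℕ) + i.rev = M := by rw [Fin.val_rev]; omega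
    rw [hfQ i i.rev hi.le, ← hab i, ha, hb]
    refine (congrArg (P i * Q i.rev).coeff hi.symm).trans ?_
    exact Polynomial.coeff_mul_add_eq_of_natDegree_le
      (Polynomial.natDegree_eq_of_degree_eq_some (hPdeg i)).le
      (Polynomial.natDegree_eq_of_degree_eq_some (hQdeg _)).le
  have key : ∀ n : ℕ, ∀ i : Fin (M + 1), (i : ℕ) = n →
      (∀ k, f i k = (Q i.rev).eval (x k)) ∧ p i = q i.rev := by
    intro n
    induction n using Nat.strong_induction_on with
    | _ n ih =>
    intro i hi
    have hq0 := (hq i.rev).ne'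
    have hprop : ∀ k, f i k - p i / q i.rev * (Q i.rev).eval (x k) = 0 := by
      refine eq_zero_of_orthogonal (fun j k => (Q j).eval (x k)) v q _ hv hq hQorth fun j => ?_
      have hsplit : ∑ k, (f i k - p i / q i.rev * (Q i.rev).eval (x k)) * (Q j).eval (x k) * v k
          = ∑ k, f i k * (Q j).eval (x k) * v k
            - p i / q i.rev * if i.rev = j then q i.rev else 0 := by
        rw [← hQorth, Finset.mul_sum, ← Finset.sum_sub_distrib]
        exact Finset.sum_congr rfl fun k _ => by ring
      rw [hsplit]
      rcases lt_trichotomy ((i : ℕ) + j) M with h | h | h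
      · have hne : i.rev ≠ j := fun e => by
          have := Fin.val_rev i
          rw [e] at this
          omega
        rw [hlt i j h, if_neg hne]
        simp
      · have he : i.rev = j := Fin.ext (by rw [Fin.val_rev]; omega)
        rw [if_pos he, ← he, hdiag, div_mul_cancel₀ _ hq0, sub_self]
      · have hne : i.rev ≠ j := fun e => by
          have := Fin.val_rev i
          rw [e] at this
          omega
        -- `M - j < i`, so `Q j` is already known to be `f (M - j)`, which is orthogonal to `f i`.
        have hj := (ih j.rev (by rw [Fin.val_rev]; omega) j.rev rfl).1
        rw [Fin.rev_rev] at hj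
        simp only [← hj]
        rw [hff, if_neg hne, if_neg (fun e => hne (by rw [e, Fin.rev_rev]))]
        simp
    have hfi : ∀ k, f i k = p i / q i.rev * (Q i.rev).eval (x k) := fun k => sub_eq_zero.1 (hprop k)
    have hpq : p i = q i.rev := by
      have h1 : ∑ k, f i k * f i k * v k
          = p i / q i.rev * ∑ k, f i k * (Q i.rev).eval (x k) * v k := by
        rw [Finset.mul_sum]
        refine Finset.sum_congr rfl fun k _ => ?_
        linear_combination f i k * v k * hfi k
      rw [hff, if_pos rfl, hdiag] at h1
      have h2 : p i / q i.rev = 1 := mul_right_cancel₀ (hp i).ne' (by rw [← h1, one_mul])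
      exact (div_eq_one_iff_eq hq0).1 h2
    exact ⟨fun k => by rw [hfi k, hpq, div_self hq0, one_mul], hpq⟩
  refine ⟨fun i k => ?_, fun i => ⟨hab i, (key i i rfl).2⟩⟩
  rw [← (key i i rfl).1 k]
  change _ = Real.sign (D k) * ((P i).eval (x k) * u k * D k) * Real.sqrt (v k)
  -- `sign D * D = |D|`, and `u |D| √v = √u` because `√u √v |D| = 1`.
  have hs : Real.sign (D k) * D k = |D k| := by
    rcases (hD0 k).lt_or_gt with h | h
    · rw [Real.sign_of_neg h, abs_of_neg h]; ring
    · rw [Real.sign_of_pos h, abs_of_pos h]; ring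
  have h1 : √(u k) * √(v k) * |D k| = 1 := by
    rw [← Real.sqrt_mul (hu k).le, ← Real.sqrt_sq_eq_abs,
      ← Real.sqrt_mul (mul_pos (hu k) (hv k)).le, huvD, Real.sqrt_one]
  have h2 : √(u k) * √(u k) = u k := Real.mul_self_sqrt (hu k).le
  linear_combination (-(P i).eval (x k) * u k * √(v k)) * hs
    - (P i).eval (x k) * √(u k) * h1 + (P i).eval (x k) * √(v k) * |D k| * h2
end

section
/- Let X = {x_0, …, x_M} be M+1 distinct real points, let u, v be positive functions on X with u(x_k)·v(x_k) = 1/∏_{i≠k}(x_k − x_i)² for every k, and let P_0,…,P_M be orthogonal polynomials for the weight u with leading coefficients a_i and squared norms p_i. For 0 ≤ i ≤ M, let Q_i be the unique polynomial of degree ≤ M with Q_i(x_k) = ∏_{j≠k}(x_k − x_j) · P_{M−i}(x_k) · u(x_k) for all k. Then Q_i has degree exactly i and its leading coefficient equals p_{M−i}/a_{M−i}. -/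
/-!
By Lagrange interpolation, a polynomial `F` of degree `≤ M` has
`F.coeff M = ∑ k, F(x_k) / ∏_{j ≠ k} (x_k - x_j)`. Let `d = deg Q ≤ M` and apply this to
`F = Q * P_{M-d}`: the left side is `lc(Q) * a_{M-d} ≠ 0`, and the prescribed values of `Q` turn
the right side into `∑ k, P_{M-d}(x_k) P_{M-i}(x_k) u(x_k)`, which orthogonality makes zero
unless `d = i`. Hence `d = i` and `lc(Q) * a_{M-i} = p_{M-i}`.
-/

open Polynomial

/-- The interpolation polynomial `Q_i` of degree `≤ M` with
`Q_i(x_k) = ∏_{j ≠ k}(x_k - x_j) · P_{M-i}(x_k) · u(x_k)` has degree exactly `i`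
and leading coefficient `p_{M-i} / a_{M-i}`. -/
theorem dual_interpolation_degree_leadingCoeff
    (M : ℕ) (x : Fin (M + 1) → ℝ) (hx : Function.Injective x)
    (u v : Fin (M + 1) → ℝ) (hu : ∀ k, 0 < u k) (hv : ∀ k, 0 < v k)
    (huv : ∀ k, u k * v k = 1 / ∏ i ∈ Finset.univ.erase k, (x k - x i) ^ 2)
    (P : Fin (M + 1) → Polynomial ℝ) (a p : Fin (M + 1) → ℝ)
    (hPdeg : ∀ i, (P i).degree = (i : ℕ))
    (ha : ∀ i, a i = (P i).coeff i)
    (hp : ∀ i, 0 < p i)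
    (hPorth : ∀ i j, ∑ k, (P i).eval (x k) * (P j).eval (x k) * u k
        = if i = j then p i else 0)
    (i : Fin (M + 1)) (Q : Polynomial ℝ)
    (hQdeg : Q.degree ≤ (M : ℕ))
    (hQval : ∀ k, Q.eval (x k)
        = (∏ j ∈ Finset.univ.erase k, (x k - x j)) * (P i.rev).eval (x k) * u k) :
    Q.degree = (i : ℕ) ∧ Q.coeff i = p i.rev / a i.rev := by
  have hprod : ∀ k, ∏ j ∈ Finset.univ.erase k, (x k - x j) ≠ 0 := fun k =>
    Finset.prod_ne_zero_iff.2 fun j hj =>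
      sub_ne_zero.2 fun h => (Finset.ne_of_mem_erase hj) (hx h).symm
  have hQ0 : Q ≠ 0 := by
    rintro rfl
    -- otherwise `P_{M-i} * u` vanishes at every node, so that `p_{M-i} = 0`
    have hzero : ∀ k, (P i.rev).eval (x k) * u k = 0 := fun k => by
      have h := hQval k
      rw [eval_zero, mul_assoc] at h
      exact (mul_eq_zero.1 h.symm).resolve_left (hprod k)
    have h := hPorth i.rev i.rev
    rw [if_pos rfl, Finset.sum_eq_zero fun k _ => by rw [mul_assoc, hzero, mul_zero]] at h
    exact (hp i.rev).ne h
  have hdM : Q.natDegree ≤ M := natDegree_le_of_degree_le hQdeg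
  obtain ⟨d, hd⟩ : ∃ d : Fin (M + 1), (d : ℕ) = Q.natDegree :=
    ⟨⟨Q.natDegree, by omega⟩, rfl⟩
  have hrev : ((d.rev : Fin (M + 1)) : ℕ) = M - d := by rw [Fin.val_rev]; omega
  have hPnat : ∀ j, (P j).natDegree = (j : ℕ) := fun j => natDegree_eq_of_degree_eq_some (hPdeg j)
  have ha0 : ∀ j, a j ≠ 0 := fun j h => by
    rw [ha, ← hPnat, coeff_natDegree, leadingCoeff_eq_zero] at h
    have := hPdeg j
    simp [h] at this
  have hM : (d : ℕ) + (d.rev : Fin (M + 1)) = M := by omega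
  have hdeg : (Q * P d.rev).degree = (M : ℕ) := by
    rw [degree_mul, hPdeg, degree_eq_natDegree hQ0, ← hd]
    exact_mod_cast hM
  have hcoeff : (Q * P d.rev).coeff M = Q.coeff d * a d.rev := by
    have h := coeff_mul_add_eq_of_natDegree_le hd.ge (hPnat d.rev).le
    rwa [hM, ← ha] at h
  have hsum : (Q * P d.rev).coeff M = if i.rev = d.rev then p i.rev else 0 := by
    have h := Lagrange.coeff_eq_sum (s := Finset.univ) (v := x) (P := Q * P d.rev)
      hx.injOn (by rw [hdeg, Finset.card_fin]; exact_mod_cast M.lt_succ_self)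
    simp only [Finset.card_univ, Fintype.card_fin, Nat.add_sub_cancel] at h
    rw [h, ← hPorth]
    refine Finset.sum_congr rfl fun k _ => ?_
    rw [eval_mul, hQval, div_eq_iff (hprod k)]
    ring
  have hlead : Q.coeff d ≠ 0 := by
    rw [hd, coeff_natDegree]
    exact leadingCoeff_ne_zero.2 hQ0
  rw [hcoeff] at hsum
  by_cases hid : i.rev = d.rev
  · obtain rfl : i = d := Fin.rev_injective hid
    rw [if_pos rfl] at hsum
    exact ⟨by rw [degree_eq_natDegree hQ0, hd], (eq_div_iff (ha0 _)).2 hsum⟩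
  · rw [if_neg hid] at hsum
    exact absurd hsum (mul_ne_zero hlead (ha0 _))
end

section
/- Let X = {x_0, …, x_M} be M+1 distinct real points and let u, v be positive functions on X with u(x_k)·v(x_k) = 1/∏_{i≠k}(x_k − x_i)² for every k. Then for every m = 1,…,M and every m-element subset A ⊆ X, one has 𝒫_u^{(m)}(A) = 𝒫_v^{(M−m+1)}(X ∖ A), where 𝒫_w^{(m)} is the probability measure on m-element subsets of X proportional to ∏_{{x,y}⊆A, x≠y}(x−y)² · ∏_{x∈A} w(x). -/
/-!
Write `d a b` for `|x a - x b|` off the diagonal and `1` on it, and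
`P(S, T) = ∏_{a ∈ S} ∏_{b ∈ T} d a b`.
The squared Vandermonde product of `A` is `P(A, A)`, and the hypothesis on `u, v` says
`u k * v k * P({k}, X)² = 1`. Multiplying the latter over `k ∈ A` and splitting
`P(A, X) = P(A, A) P(A, Aᶜ)` and `P(X, X) = P(A, A) P(A, Aᶜ)² P(Aᶜ, Aᶜ)` gives
`W_u(A) * W_v(X) = W_v(Aᶜ)` for the unnormalized weights `W`. The constant `W_v(X) > 0` does not
depend on `A`, so it cancels after normalization, complementation being a bijection between the
index sets of the two normalizing sums.
-/

open Finset

/-- The unnormalized weight of a subset `A`: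
`∏_{pairs {a,b} ⊆ A}(x_a - x_b)² · ∏_{a ∈ A} w(a)`. -/
noncomputable def ensembleWeight {M : ℕ} (x w : Fin (M + 1) → ℝ)
    (A : Finset (Fin (M + 1))) : ℝ :=
  (∏ a ∈ A, ∏ b ∈ A.filter (fun b => b < a), (x a - x b) ^ 2) * ∏ a ∈ A, w a

/-- The discrete orthogonal polynomial ensemble `𝒫_w^{(m)}`: the probability
measure on `m`-element subsets of `X` proportional to
`∏_{pairs}(x-y)² ∏ w(x)` (and vanishing on subsets of other cardinalities). -/
noncomputable def ensembleMeasure {M : ℕ} (x w : Fin (M + 1) → ℝ) (m : ℕ)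
    (A : Finset (Fin (M + 1))) : ℝ :=
  if A.card = m then
    ensembleWeight x w A / ∑ B ∈ Finset.univ.powersetCard m, ensembleWeight x w B
  else 0

/-- The distance `|x a - x b|` between two points, with the value `1` on the diagonal so that
products may run over all pairs. -/
noncomputable def offDist {M : ℕ} (x : Fin (M + 1) → ℝ) (a b : Fin (M + 1)) : ℝ :=
  if a = b then 1 else |x a - x b|

lemma offDist_comm {M : ℕ} (x : Fin (M + 1) → ℝ) (a b : Fin (M + 1)) :
    offDist x a b = offDist x b a := by
  unfold offDist
  rw [abs_sub_comm]
  simp only [eq_comm]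

lemma offDist_pos {M : ℕ} {x : Fin (M + 1) → ℝ} (hx : Function.Injective x)
    (a b : Fin (M + 1)) : 0 < offDist x a b := by
  unfold offDist
  split_ifs with h
  · exact one_pos
  · exact abs_pos.2 (sub_ne_zero.2 fun e => h (hx e))

/-- Each unordered pair contributes its squared distance once on the left, and its distance twice
(once per order) on the right. -/
lemma ensembleWeight_eq {M : ℕ} (x w : Fin (M + 1) → ℝ) (A : Finset (Fin (M + 1))) :
    ensembleWeight x w A = (∏ a ∈ A, ∏ b ∈ A, offDist x a b) * ∏ a ∈ A, w a := by
  unfold ensembleWeight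
  congr 1
  let h : Fin (M + 1) → Fin (M + 1) → ℝ := fun a b => if b < a then |x a - x b| else 1
  have h1 : ∀ a b, offDist x a b = h a b * h b a := by
    intro a b
    rcases lt_trichotomy a b with hab | rfl | hab
    · simp [offDist, h, hab, hab.ne, hab.not_gt, abs_sub_comm]
    · simp [offDist, h]
    · simp [offDist, h, hab, hab.ne', hab.not_gt]
  have h2 : ∏ a ∈ A, ∏ b ∈ A, h b a = ∏ a ∈ A, ∏ b ∈ A, h a b := Finset.prod_comm
  simp only [h1, Finset.prod_mul_distrib, h2]
  simp only [← Finset.prod_mul_distrib, Finset.prod_filter]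
  refine Finset.prod_congr rfl fun a _ => Finset.prod_congr rfl fun b _ => ?_
  by_cases hab : b < a
  · simp [h, hab, sq]
  · simp [h, hab]

lemma ensembleWeight_pos {M : ℕ} {x w : Fin (M + 1) → ℝ} (hx : Function.Injective x)
    (hw : ∀ k, 0 < w k) (A : Finset (Fin (M + 1))) : 0 < ensembleWeight x w A := by
  rw [ensembleWeight_eq]
  exact mul_pos (Finset.prod_pos fun a _ => Finset.prod_pos fun b _ => offDist_pos hx a b)
    (Finset.prod_pos fun a _ => hw a)

/-- The unnormalized form of the complementation identity: up to the constant
`ensembleWeight x v univ`, the weights of `A` and of its complement agree. -/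
lemma ensembleWeight_mul_univ {M : ℕ} {x : Fin (M + 1) → ℝ} (hx : Function.Injective x)
    {u v : Fin (M + 1) → ℝ}
    (huv : ∀ k, u k * v k = 1 / ∏ i ∈ Finset.univ.erase k, (x k - x i) ^ 2)
    (A : Finset (Fin (M + 1))) :
    ensembleWeight x u A * ensembleWeight x v Finset.univ = ensembleWeight x v Aᶜ := by
  have hk : ∀ k, u k * v k * (∏ i, offDist x k i) ^ 2 = 1 := by
    intro k
    have e : (∏ i, offDist x k i) ^ 2 = ∏ i ∈ Finset.univ.erase k, (x k - x i) ^ 2 := by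
      rw [← Finset.mul_prod_erase _ _ (Finset.mem_univ k), mul_pow, ← Finset.prod_pow]
      have hd : offDist x k k = 1 := by simp [offDist]
      rw [hd, one_pow, one_mul]
      refine Finset.prod_congr rfl fun i hi => ?_
      simp [offDist, (Finset.ne_of_mem_erase hi).symm]
    have hpos : 0 < (∏ i, offDist x k i) ^ 2 :=
      pow_pos (Finset.prod_pos fun i _ => offDist_pos hx k i) 2
    rw [huv, ← e, one_div, inv_mul_cancel₀ hpos.ne']
  have split : ∀ f : Fin (M + 1) → ℝ, ∏ i, f i = (∏ i ∈ A, f i) * ∏ i ∈ Aᶜ, f i :=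
    fun f => (Finset.prod_mul_prod_compl A f).symm
  have hA : (∏ k ∈ A, u k) * (∏ k ∈ A, v k) * ((∏ k ∈ A, ∏ i ∈ A, offDist x k i) *
      ∏ k ∈ A, ∏ i ∈ Aᶜ, offDist x k i) ^ 2 = 1 := by
    rw [← Finset.prod_mul_distrib, ← Finset.prod_mul_distrib, ← Finset.prod_pow,
      ← Finset.prod_mul_distrib]
    exact Finset.prod_eq_one fun k _ => by rw [← split, hk]
  have hsymm : ∏ k ∈ Aᶜ, ∏ i ∈ A, offDist x k i = ∏ k ∈ A, ∏ i ∈ Aᶜ, offDist x k i := by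
    rw [Finset.prod_comm]
    exact Finset.prod_congr rfl fun a _ => Finset.prod_congr rfl fun b _ => offDist_comm x b a
  simp only [ensembleWeight_eq]
  rw [split v, split fun a => ∏ b, offDist x a b]
  simp only [split (offDist x _), Finset.prod_mul_distrib]
  rw [hsymm]
  linear_combination ((∏ k ∈ Aᶜ, ∏ i ∈ Aᶜ, offDist x k i) * ∏ k ∈ Aᶜ, v k) * hA

/-- (Borodin, Proposition 2.) If `u(x_k) v(x_k) = 1 / ∏_{i≠k}(x_k - x_i)²`, then
`𝒫_u^{(m)}(A) = 𝒫_v^{(M-m+1)}(X \ A)` for every `m`-element subset `A ⊆ X`. -/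
theorem ensemble_complementation
    (M : ℕ) (x : Fin (M + 1) → ℝ) (hx : Function.Injective x)
    (u v : Fin (M + 1) → ℝ) (hu : ∀ k, 0 < u k) (hv : ∀ k, 0 < v k)
    (huv : ∀ k, u k * v k = 1 / ∏ i ∈ Finset.univ.erase k, (x k - x i) ^ 2)
    (m : ℕ) (hm1 : 1 ≤ m) (hmM : m ≤ M)
    (A : Finset (Fin (M + 1))) (hA : A.card = m) :
    ensembleMeasure x u m A = ensembleMeasure x v (M - m + 1) Aᶜ := by
  have hC : ensembleWeight x v Finset.univ ≠ 0 := (ensembleWeight_pos hx hv _).ne'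
  have hcard : Aᶜ.card = M - m + 1 := by
    rw [Finset.card_compl, Fintype.card_fin]
    omega
  have hsum : (∑ B ∈ Finset.univ.powersetCard m, ensembleWeight x u B) *
      ensembleWeight x v Finset.univ =
      ∑ B ∈ Finset.univ.powersetCard (M - m + 1), ensembleWeight x v B := by
    rw [Finset.sum_mul]
    refine Finset.sum_bij' (fun B _ => Bᶜ) (fun B _ => Bᶜ) ?_ ?_ ?_ ?_ ?_
    · intro B hB
      simp only [Finset.mem_powersetCard_univ, Finset.card_compl, Fintype.card_fin] at hB ⊢
      omega
    · intro B hB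
      simp only [Finset.mem_powersetCard_univ, Finset.card_compl, Fintype.card_fin] at hB ⊢
      omega
    · exact fun B _ => compl_compl B
    · exact fun B _ => compl_compl B
    · exact fun B _ => ensembleWeight_mul_univ hx huv B
  rw [ensembleMeasure, ensembleMeasure, if_pos hA, if_pos hcard, ← hsum,
    ← ensembleWeight_mul_univ hx huv A, mul_div_mul_right _ _ hC]
end

section
/- Let X = {x_0, …, x_M} be M+1 distinct real points and let u, v be positive functions on X with u(x_k)·v(x_k) = 1/∏_{i≠k}(x_k − x_i)² for every k. Then there exists a constant c > 0, independent of the subset, such that for every subset A ⊆ X: ∏_{{x,y}⊆A, x≠y}(x−y)² · ∏_{x∈A} u(x) = c · ∏_{{x,y}⊆X∖A, x≠y}(x−y)² · ∏_{x∈X∖A} v(x). -/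
/-!
Both sides are compared while the points of `A` are added one at a time. Adding `k` to `A`
multiplies the left-hand side by `u k * ∏ b ∈ A, (x k - x b) ^ 2` and divides the right-hand
side by `v k * ∏ b ∈ B, (x k - x b) ^ 2`, where `B` is the complement of `insert k A`. Since `A`
and `B` together exhaust the points other than `k`, the hypothesis on `u k * v k` says exactly
that these two factors are inverse to each other. Hence the ratio of the two sides does
not depend on `A`, and `c` is its value at `A = ∅`. The effect of adding one point is
`pairProd_insert`.
-/

open Finset

/-- The product of `(x a - x b) ^ 2` over the unordered pairs of distinct indices in `s`,
each pair being listed once, with `b < a`. -/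
noncomputable def pairProd {n : ℕ} (x : Fin n → ℝ) (s : Finset (Fin n)) : ℝ :=
  ∏ a ∈ s, ∏ b ∈ s.filter (fun b => b < a), (x a - x b) ^ 2

lemma pairProd_insert {n : ℕ} (x : Fin n → ℝ) (s : Finset (Fin n)) (k : Fin n) (hk : k ∉ s) :
    pairProd x (insert k s) = pairProd x s * ∏ b ∈ s, (x k - x b) ^ 2 := by
  simp only [pairProd, prod_filter]
  rw [prod_insert hk, prod_insert hk]
  simp only [prod_insert hk, prod_mul_distrib, lt_irrefl, if_false, one_mul]
  -- Each `b ∈ s` is paired with `k` either as the smaller or as the larger index.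
  have key : (∏ b ∈ s, if b < k then (x k - x b) ^ 2 else 1) *
      (∏ b ∈ s, if k < b then (x b - x k) ^ 2 else 1) = ∏ b ∈ s, (x k - x b) ^ 2 := by
    rw [← prod_mul_distrib]
    refine prod_congr rfl fun b hb => ?_
    have hne : b ≠ k := fun h => hk (h ▸ hb)
    rcases lt_or_gt_of_ne hne with h | h
    · simp [h, h.not_gt]
    · simp only [h, h.not_gt, if_true, if_false]
      ring
  rw [← key]
  ring

lemma pairProd_pos {n : ℕ} (x : Fin n → ℝ) (hx : Function.Injective x) (s : Finset (Fin n)) :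
    0 < pairProd x s := by
  refine prod_pos fun a _ => prod_pos fun b hb => ?_
  have hne : x a - x b ≠ 0 := sub_ne_zero.2 (hx.ne (mem_filter.1 hb).2.ne')
  positivity

/-- If `u(x_k) v(x_k) = 1 / ∏_{i≠k}(x_k - x_i)²`, then there is a constant
`c > 0`, independent of the subset `A`, such that
`∏_{pairs ⊆ A}(x-y)² ∏_{x∈A} u(x) = c · ∏_{pairs ⊆ X∖A}(x-y)² ∏_{x∈X∖A} v(x)`. -/
theorem weight_complement_const
    (M : ℕ) (x : Fin (M + 1) → ℝ) (hx : Function.Injective x)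
    (u v : Fin (M + 1) → ℝ) (hu : ∀ k, 0 < u k) (hv : ∀ k, 0 < v k)
    (huv : ∀ k, u k * v k = 1 / ∏ i ∈ Finset.univ.erase k, (x k - x i) ^ 2) :
    ∃ c : ℝ, 0 < c ∧ ∀ A : Finset (Fin (M + 1)),
      (∏ a ∈ A, ∏ b ∈ A.filter (fun b => b < a), (x a - x b) ^ 2) * (∏ a ∈ A, u a)
        = c * ((∏ a ∈ Aᶜ, ∏ b ∈ Aᶜ.filter (fun b => b < a), (x a - x b) ^ 2)
            * ∏ a ∈ Aᶜ, v a) := by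
  have hpos : 0 < pairProd x univ * ∏ a, v a :=
    mul_pos (pairProd_pos x hx _) (prod_pos fun a _ => hv a)
  refine ⟨(pairProd x univ * ∏ a, v a)⁻¹, inv_pos.2 hpos, fun A => ?_⟩
  generalize hc : (pairProd x univ * ∏ a, v a)⁻¹ = c
  change pairProd x A * _ = c * (pairProd x Aᶜ * _)
  induction A using Finset.induction_on with
  | empty =>
    rw [← hc, compl_empty, inv_mul_cancel₀ hpos.ne']
    simp [pairProd]
  | insert k A hk ih =>
    have hkB : k ∉ (insert k A)ᶜ := by simp
    have hA : Aᶜ = insert k (insert k A)ᶜ := by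
      ext i
      by_cases h : i = k <;> simp [h, hk]
    have hdisj : Disjoint A (insert k A)ᶜ :=
      disjoint_compl_right.mono_left (subset_insert k A)
    have hunion : univ.erase k = A ∪ (insert k A)ᶜ := by
      ext i
      by_cases h : i = k
      · simp [h, hk]
      · simp [h, em]
    have hne : ∏ i ∈ univ.erase k, (x k - x i) ^ 2 ≠ 0 := by
      refine prod_ne_zero_iff.2 fun i hi => pow_ne_zero _ (sub_ne_zero.2 (hx.ne ?_))
      exact (ne_of_mem_erase hi).symm
    have hk1 := huv k
    rw [eq_div_iff hne, hunion, prod_union hdisj] at hk1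
    rw [hA, pairProd_insert x _ k hkB, prod_insert hkB] at ih
    rw [pairProd_insert x A k hk, prod_insert hk]
    generalize (insert k A)ᶜ = B at *
    linear_combination (u k * ∏ b ∈ A, (x k - x b) ^ 2) * ih +
      (c * pairProd x B * ∏ a ∈ B, v a) * hk1
end

section
/- Let X = {x_0, …, x_M} be M+1 distinct real points, u a positive function on X, and P_0,…,P_M the orthogonal polynomials for the weight u with squared norms p_i. For 1 ≤ m ≤ M let 𝒫_u^{(m)} be the probability measure on m-element subsets of X proportional to ∏_{pairs}(x−y)²·∏ u(x). Then for every n = 1,…,m and every n-element subset {x_{i_1},…,x_{i_n}} ⊆ X, the n-th correlation function satisfies ρ_n({x_{i_1},…,x_{i_n}} | 𝒫_u^{(m)}) = det[K_u^{(m)}(x_{i_k}, x_{i_l})]_{k,l=1,…,n}, where K_u^{(m)}(x,y) = √(u(x)u(y)) · ∑_{i=0}^{m−1} P_i(x)P_i(y)/p_i. -/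
/-!
Write `N = M + 1` and let `Φ` be the `m × N` matrix `Φ i k = P_i(x_k) √u_k / √p_i`.
Orthogonality says `Φ Φᵀ = 1`, and the kernel is `K = Φᵀ Φ`. For `|B| = m` the principal minor
`det K_B` is the square of a determinant that column operations turn into a Vandermonde determinant,
so it equals a positive constant times `ensembleWeight x u B` (`det_kernel_eq_const_mul_weight`).

The Cauchy–Binet formula in the form `det (U V) = ∑_{|B| = m} det (V U)_B`
(`det_mul_eq_sum_principal_minors`) follows by comparing the coefficients of `X ^ m` in
`det (1 + X U V) = det (1 + X V U)`. For `Φ` itself it gives `∑_{|B| = m} det K_B = 1`, so the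
ensemble gives `B` mass exactly `det K_B`. Applied to `Φ D Φᵀ`, where `D` is diagonal with entries
`X` on `A` and `1` elsewhere, it gives
`∑_{|B| = m} det K_B X ^ |A ∩ B| = det (1 + (X - 1) Φ_A Φ_Aᵀ) = det (X K_A + (1 - K_A))`.
The coefficients of `X ^ |A|` on the two sides are the correlation function and `det K_A`.
-/

open Finset

/-- The `n`-th correlation function `ρ_n(A | μ) = ∑_{B ⊇ A} μ(B)`. -/
noncomputable def correlation {M : ℕ} (μ : Finset (Fin (M + 1)) → ℝ)
    (A : Finset (Fin (M + 1))) : ℝ :=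
  ∑ B ∈ Finset.univ.powerset.filter (fun B => A ⊆ B), μ B

/-- The Christoffel–Darboux kernel
`K_u^{(m)}(x_k, x_l) = √(u(x_k) u(x_l)) ∑_{i=0}^{m-1} P_i(x_k) P_i(x_l)/p_i`. -/
noncomputable def cdKernel {M : ℕ} (x w : Fin (M + 1) → ℝ)
    (P : Fin (M + 1) → Polynomial ℝ) (p : Fin (M + 1) → ℝ) (m : ℕ)
    (k l : Fin (M + 1)) : ℝ :=
  Real.sqrt (w k * w l) *
    ∑ i ∈ Finset.univ.filter (fun i : Fin (M + 1) => (i : ℕ) < m),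
      (P i).eval (x k) * (P i).eval (x l) / p i

open Polynomial Matrix

/-- A form of the Cauchy–Binet formula: both sides are the coefficient of `X ^ m` in
`det (1 + X • U V) = det (1 + X • V U)`. -/
lemma det_mul_eq_sum_principal_minors {R ι : Type*} [CommRing R] [Fintype ι] [DecidableEq ι]
    {m : ℕ} (U : Matrix (Fin m) ι R) (V : Matrix ι (Fin m) R) :
    (U * V).det = ∑ B ∈ (Finset.univ : Finset ι).powersetCard m,
      ((V * U).submatrix (Subtype.val : B → ι) (Subtype.val : B → ι)).det := by
  have h1 := coeff_det_one_add_X_smul_eq_sum_minors (V * U) m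
  have h2 := coeff_det_X_add_C_card (U * V) (1 : Matrix (Fin m) (Fin m) R)
  rw [← h1, ← h2, Fintype.card_fin, add_comm]
  congr 1
  have e1 : (1 : Matrix (Fin m) (Fin m) R).map (C : R →+* R[X]) = 1 := by
    ext i j; simp [Matrix.one_apply, apply_ite]
  rw [e1, Matrix.map_mul, Matrix.map_mul, ← Matrix.smul_mul, det_one_add_mul_comm,
    Matrix.mul_smul]

section Ensemble

variable {M m : ℕ} (x u : Fin (M + 1) → ℝ) (P : Fin (M + 1) → Polynomial ℝ)
  (p : Fin (M + 1) → ℝ) (hm : m ≤ M + 1)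

/-- The matrix of the first `m` normalized orthogonal functions,
`Φ i k = P_i(x_k) √u_k / √p_i`. -/
noncomputable def orthoMatrix : Matrix (Fin m) (Fin (M + 1)) ℝ :=
  Matrix.of fun i k => (P (Fin.castLE hm i)).eval (x k) * √(u k) / √(p (Fin.castLE hm i))

lemma orthoMatrix_mul_transpose (hu : ∀ k, 0 < u k) (hp : ∀ i, 0 < p i)
    (hPorth : ∀ i j, ∑ k, (P i).eval (x k) * (P j).eval (x k) * u k
        = if i = j then p i else 0) :
    orthoMatrix x u P p hm * (orthoMatrix x u P p hm)ᵀ = 1 := by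
  ext i j
  have h := hPorth (Fin.castLE hm i) (Fin.castLE hm j)
  have hk : ∀ k, orthoMatrix x u P p hm i k * orthoMatrix x u P p hm j k =
      ((P (Fin.castLE hm i)).eval (x k) * (P (Fin.castLE hm j)).eval (x k) * u k) *
        (√(p (Fin.castLE hm i)) * √(p (Fin.castLE hm j)))⁻¹ := by
    intro k
    have h2 : √(u k) * √(u k) = u k := Real.mul_self_sqrt (hu k).le
    simp only [orthoMatrix, Matrix.of_apply, div_eq_mul_inv, mul_inv]
    linear_combination ((P (Fin.castLE hm i)).eval (x k) * (P (Fin.castLE hm j)).eval (x k) *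
      (√(p (Fin.castLE hm i)))⁻¹ * (√(p (Fin.castLE hm j)))⁻¹) * h2
  simp only [Matrix.mul_apply, Matrix.transpose_apply, hk, ← Finset.sum_mul, h]
  by_cases hij : i = j
  · subst hij
    simp [Real.mul_self_sqrt (hp _).le, (hp (Fin.castLE hm i)).ne']
  · simp [hij]

lemma transpose_mul_orthoMatrix (hu : ∀ k, 0 < u k) (hp : ∀ i, 0 < p i) (k l : Fin (M + 1)) :
    ((orthoMatrix x u P p hm)ᵀ * orthoMatrix x u P p hm) k l = cdKernel x u P p m k l := by
  have hs : Finset.univ.filter (fun i : Fin (M + 1) => (i : ℕ) < m)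
      = Finset.univ.map (Fin.castLEEmb hm) := by
    ext i
    simp only [Finset.mem_filter, Finset.mem_univ, true_and, Finset.mem_map,
      Fin.castLEEmb_apply]
    exact ⟨fun h => ⟨⟨i, h⟩, rfl⟩, fun ⟨j, hj⟩ => hj ▸ j.2⟩
  rw [cdKernel, hs, Finset.sum_map, Finset.mul_sum, Matrix.mul_apply]
  refine Finset.sum_congr rfl fun i _ => ?_
  have h2 : √(p (Fin.castLE hm i)) * √(p (Fin.castLE hm i)) = p (Fin.castLE hm i) :=
    Real.mul_self_sqrt (hp _).le
  simp only [Matrix.transpose_apply, orthoMatrix, Matrix.of_apply, Fin.castLEEmb_apply]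
  rw [div_mul_div_comm, h2, Real.sqrt_mul (hu k).le]
  ring

/-- The weight of `B` is a squared Vandermonde determinant times the product of the values of `u`;
the points of `B` are listed in increasing order of their indices. -/
lemma det_vandermonde_sq_mul_prod (B : Finset (Fin (M + 1))) (hB : B.card = m) :
    (Matrix.vandermonde fun i : Fin m => x (B.orderIsoOfFin hB i)).det ^ 2 *
      ∏ i : Fin m, u (B.orderIsoOfFin hB i) = ensembleWeight x u B := by
  have key : ∀ f : Fin (M + 1) → ℝ, ∏ i : Fin m, f (B.orderIsoOfFin hB i) = ∏ b ∈ B, f b := by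
    intro f
    rw [← Finset.prod_coe_sort B f]
    exact Fintype.prod_equiv (B.orderIsoOfFin hB).toEquiv _ _ fun _ => rfl
  rw [ensembleWeight, key u, det_vandermonde, ← Finset.prod_pow]
  congr 1
  simp_rw [← Finset.prod_pow, ← Finset.filter_lt_eq_Ioi, Finset.prod_filter]
  rw [Finset.prod_comm, ← key]
  refine Finset.prod_congr rfl fun i _ => ?_
  rw [← key]
  simp

lemma det_kernel_eq_const_mul_weight (hu : ∀ k, 0 < u k) (hp : ∀ i, 0 < p i)
    (hPdeg : ∀ i, (P i).degree = (i : ℕ)) (B : Finset (Fin (M + 1))) (hB : B.card = m) :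
    (((orthoMatrix x u P p hm)ᵀ * orthoMatrix x u P p hm).submatrix
      (Subtype.val : B → Fin (M + 1)) (Subtype.val : B → Fin (M + 1))).det =
    (∏ i : Fin m, (P (Fin.castLE hm i)).leadingCoeff ^ 2 / p (Fin.castLE hm i)) *
      ensembleWeight x u B := by
  have hnat : ∀ i, (P i).natDegree = (i : ℕ) := fun i => natDegree_eq_of_degree_eq_some (hPdeg i)
  let e := B.orderIsoOfFin hB
  let S : Matrix (Fin m) (Fin m) ℝ := Matrix.of fun k i =>
    (P (Fin.castLE hm i)).eval (x (e k))
  have hS : S.det = (Matrix.vandermonde fun i : Fin m => x (e i)).det *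
      ∏ i : Fin m, (P (Fin.castLE hm i)).leadingCoeff := by
    have := eval_matrixOfPolynomials_eq_vandermonde_mul_matrixOfPolynomials
      (fun i : Fin m => x (e i)) (fun i => P (Fin.castLE hm i))
      (fun i => (hnat (Fin.castLE hm i)).le)
    rw [show S = _ from this, det_mul,
      det_of_isUpperTriangular (M := Matrix.of fun i j : Fin m => (P (Fin.castLE hm j)).coeff i)]
    · congr 1
      refine Finset.prod_congr rfl fun i _ => ?_
      rw [leadingCoeff, hnat]
      rfl
    · intro i j hij
      apply coeff_eq_zero_of_natDegree_lt
      rw [hnat]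
      exact hij
  have hF : ((orthoMatrix x u P p hm)ᵀ.submatrix (fun k : Fin m => (e k : Fin (M + 1))) id).det =
      (∏ k : Fin m, √(u (e k))) * ((∏ i : Fin m, (√(p (Fin.castLE hm i)))⁻¹) * S.det) := by
    rw [← det_mul_row, ← det_mul_column]
    congr 1
    ext k i
    simp only [S, orthoMatrix, Matrix.submatrix_apply, Matrix.transpose_apply, Matrix.of_apply, id]
    ring
  rw [← det_submatrix_equiv_self e.toEquiv, submatrix_submatrix,
    ← Matrix.submatrix_mul_equiv _ _ _ (Equiv.refl (Fin m)) _, det_mul,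
    ← det_transpose (Matrix.submatrix (orthoMatrix x u P p hm) _ _), transpose_submatrix]
  refine (congrArg₂ (· * ·) hF hF).trans ?_
  rw [hS, ← det_vandermonde_sq_mul_prod x u B hB]
  have h1 : ∏ k : Fin m, u (e k) = (∏ k : Fin m, √(u (e k))) ^ 2 := by
    rw [← Finset.prod_pow]
    exact Finset.prod_congr rfl fun k _ => (Real.sq_sqrt (hu _).le).symm
  have h2 : ∏ i : Fin m, (P (Fin.castLE hm i)).leadingCoeff ^ 2 / p (Fin.castLE hm i) =
      (∏ i : Fin m, (P (Fin.castLE hm i)).leadingCoeff) ^ 2 *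
        (∏ i : Fin m, (√(p (Fin.castLE hm i)))⁻¹) ^ 2 := by
    rw [← Finset.prod_pow, ← Finset.prod_pow, ← Finset.prod_mul_distrib]
    refine Finset.prod_congr rfl fun i _ => ?_
    rw [inv_pow, Real.sq_sqrt (hp _).le, div_eq_mul_inv]
  rw [h1, h2]
  ring

end Ensemble

/-- The sum over `B ⊇ A` of the `m × m` principal minors of a rank-`m` orthogonal projection `ΦᵀΦ`
is its principal minor on `A`: the two sides are the coefficients of `X ^ |A|` in
`det (Φ D Φᵀ)`, with `D` equal to `X` on `A` and `1` off `A`. -/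
lemma sum_minors_superset {ι : Type*} [Fintype ι] [DecidableEq ι] {m : ℕ}
    (Φ : Matrix (Fin m) ι ℝ) (hΦ : Φ * Φᵀ = 1) (A : Finset ι) :
    ∑ B ∈ ((Finset.univ : Finset ι).powersetCard m).filter (fun B => A ⊆ B),
      ((Φᵀ * Φ).submatrix (Subtype.val : B → ι) (Subtype.val : B → ι)).det =
    ((Φᵀ * Φ).submatrix (Subtype.val : A → ι) (Subtype.val : A → ι)).det := by
  let d : ι → ℝ[X] := fun k => if k ∈ A then X else 1
  let Φc : Matrix (Fin m) ι ℝ[X] := Φ.map C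
  let ΦA : Matrix (Fin m) A ℝ := Φ.submatrix id Subtype.val
  let K : Matrix A A ℝ := (Φᵀ * Φ).submatrix Subtype.val Subtype.val
  have hL : (Φc * (diagonal d * Φcᵀ)).det =
      ∑ B ∈ (Finset.univ : Finset ι).powersetCard m, X ^ (A ∩ B).card *
        C ((Φᵀ * Φ).submatrix (Subtype.val : B → ι) (Subtype.val : B → ι)).det := by
    rw [det_mul_eq_sum_principal_minors]
    refine Finset.sum_congr rfl fun B _ => ?_
    have : (diagonal d * Φcᵀ * Φc).submatrix (Subtype.val : B → ι) (Subtype.val : B → ι) =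
        Matrix.of fun i j : B => d i * (((Φᵀ * Φ).submatrix (Subtype.val : B → ι)
          (Subtype.val : B → ι)).map C) i j := by
      ext1 i j
      rw [Matrix.submatrix_apply, Matrix.mul_assoc, diagonal_mul]
      simp [Φc, Matrix.mul_apply]
    rw [this, det_mul_column, Finset.prod_coe_sort B d, ← RingHom.mapMatrix_apply,
      ← RingHom.map_det]
    congr 1
    rw [Finset.prod_ite, Finset.prod_const, Finset.prod_const_one, mul_one,
      Finset.filter_mem_eq_inter, Finset.inter_comm]
  have hR : (Φc * (diagonal d * Φcᵀ)).det =
      det ((X : ℝ[X]) • K.map C + (1 - K).map C) := by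
    have e1 : Φc * (diagonal d * Φcᵀ) = 1 + ((X - 1 : ℝ[X]) • ΦA.map C) * (ΦA.map C)ᵀ := by
      have h1 : (1 : Matrix (Fin m) (Fin m) ℝ[X]) = Φc * Φcᵀ := by
        have := congrArg (fun T => T.map (C : ℝ →+* ℝ[X])) hΦ
        simp only [Matrix.map_mul] at this
        rw [← Matrix.map_one (C : ℝ →+* ℝ[X]) (map_zero _) (map_one _), ← this]
        rfl
      rw [h1]
      ext1 i j
      rw [Matrix.add_apply, Matrix.mul_apply, Matrix.mul_apply, Matrix.mul_apply]
      simp only [diagonal_mul, Matrix.transpose_apply,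
        Matrix.smul_apply, Φc, ΦA, Matrix.map_apply, Matrix.submatrix_apply, id, smul_eq_mul]
      rw [Finset.sum_coe_sort A (fun k => (X - 1) * C (Φ i k) * C (Φ j k)),
        ← Finset.univ_inter A, ← Finset.sum_ite_mem, ← Finset.sum_add_distrib]
      refine Finset.sum_congr rfl fun k _ => ?_
      by_cases hk : k ∈ A <;> simp [d, hk]
      ring
    rw [e1, det_one_add_mul_comm]
    congr 1
    have hK : (ΦA.map C)ᵀ * ΦA.map C = K.map (C : ℝ →+* ℝ[X]) := by
      ext1 i j
      simp [ΦA, K, Matrix.mul_apply]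
    rw [Matrix.mul_smul, hK]
    ext1 i j
    by_cases hij : i = j <;> simp [hij] <;> ring
  have hcoef := congrArg (fun q => q.coeff (Fintype.card A)) (hL.symm.trans hR)
  rw [coeff_det_X_add_C_card] at hcoef
  simp only [finsetSum_coeff, coeff_X_pow_mul', coeff_C,
    Fintype.card_coe] at hcoef
  change _ = K.det
  rw [← hcoef, Finset.sum_filter]
  refine Finset.sum_congr rfl fun B _ => ?_
  by_cases hAB : A ⊆ B
  · simp [hAB, Finset.inter_eq_left.mpr hAB]
  · have hlt : (A ∩ B).card < A.card :=
      Finset.card_lt_card ⟨Finset.inter_subset_left, fun h =>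
        hAB (h.trans Finset.inter_subset_right)⟩
    simp [hAB, hlt.le, (Nat.sub_pos_of_lt hlt).ne']

/-- (Borodin, Proposition 3.) The correlation functions of the orthogonal
polynomial ensemble `𝒫_u^{(m)}` are given by determinants of the
Christoffel–Darboux kernel. -/
theorem ensemble_correlation_det
    (M : ℕ) (x : Fin (M + 1) → ℝ) (hx : Function.Injective x)
    (u : Fin (M + 1) → ℝ) (hu : ∀ k, 0 < u k)
    (P : Fin (M + 1) → Polynomial ℝ) (p : Fin (M + 1) → ℝ)
    (hPdeg : ∀ i, (P i).degree = (i : ℕ))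
    (hp : ∀ i, 0 < p i)
    (hPorth : ∀ i j, ∑ k, (P i).eval (x k) * (P j).eval (x k) * u k
        = if i = j then p i else 0)
    (m : ℕ) (hm1 : 1 ≤ m) (hmM : m ≤ M)
    (n : ℕ) (hn1 : 1 ≤ n) (hnm : n ≤ m)
    (A : Finset (Fin (M + 1))) (hA : A.card = n) :
    correlation (ensembleMeasure x u m) A
      = Matrix.det (Matrix.of fun k l : A => cdKernel x u P p m k l) := by
  have hm : m ≤ M + 1 := by omega
  let Φ : Matrix (Fin m) (Fin (M + 1)) ℝ := orthoMatrix x u P p hm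
  let c : ℝ := ∏ i : Fin m, (P (Fin.castLE hm i)).leadingCoeff ^ 2 / p (Fin.castLE hm i)
  have hΦ : Φ * Φᵀ = 1 := orthoMatrix_mul_transpose x u P p hm hu hp hPorth
  have hdet : ∀ B : Finset (Fin (M + 1)), B.card = m →
      ((Φᵀ * Φ).submatrix (Subtype.val : B → Fin (M + 1)) Subtype.val).det =
        c * ensembleWeight x u B :=
    fun B hB => det_kernel_eq_const_mul_weight x u P p hm hu hp hPdeg B hB
  -- Normalization: the constant `c` is the inverse of the partition function.
  have hZ : c * ∑ B ∈ Finset.univ.powersetCard m, ensembleWeight x u B = 1 := by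
    have h := det_mul_eq_sum_principal_minors Φ Φᵀ
    rw [hΦ, det_one] at h
    rw [h, Finset.mul_sum]
    exact Finset.sum_congr rfl fun B hB => (hdet B (Finset.mem_powersetCard.mp hB).2).symm
  have hK : (Matrix.of fun k l : A => cdKernel x u P p m k l) =
      (Φᵀ * Φ).submatrix Subtype.val Subtype.val := by
    ext k l
    exact (transpose_mul_orthoMatrix x u P p hm hu hp k l).symm
  rw [hK, ← sum_minors_superset Φ hΦ A, correlation, Finset.sum_filter, Finset.sum_filter,
    Finset.powersetCard_eq_filter, Finset.sum_filter]
  refine Finset.sum_congr rfl fun B _ => ?_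
  by_cases hB : B.card = m
  · rw [if_pos hB, ensembleMeasure, if_pos hB, hdet B hB, div_eq_mul_inv,
      ← eq_inv_of_mul_eq_one_left hZ, mul_comm]
  · simp [hB, ensembleMeasure]
end

section
/- Let X = {x_0, …, x_M} be M+1 distinct real points, let u, v be positive functions on X with u(x_k)·v(x_k) = 1/∏_{i≠k}(x_k − x_i)² for every k, and let P_0,…,P_M and Q_0,…,Q_M be orthogonal polynomials for u and v with squared norms p_i and q_i. For 1 ≤ m ≤ M set K_u^{(m)}(x,y) = √(u(x)u(y))·∑_{i=0}^{m−1} P_i(x)P_i(y)/p_i and K_v^{(m)}(x,y) = √(v(x)v(y))·∑_{i=0}^{m−1} Q_i(x)Q_i(y)/q_i, viewed as (M+1)×(M+1) matrices indexed by X, and let D = diag(ε(x_0),…,ε(x_M)) with ε(x_k) = sgn ∏_{i≠k}(x_k − x_i). Then for every m = 1,…,M: K_u^{(m)} = D·(I − K_v^{(M−m+1)})·D. -/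
/-!
The normalized vectors `a_i = (√u(x_k) P_i(x_k) / √p_i)_k` and `b_j = (√v(x_k) Q_j(x_k) / √q_j)_k`
are orthonormal, and `K_u^{(m)}`, `K_v^{(M-m+1)}` are the orthogonal projections onto the spans of
`a_0, …, a_{m-1}` and `b_0, …, b_{M-m}`. The relation between `u` and `v` says that
`ε(x_k) √(u(x_k) v(x_k)) = 1 / ∏_{l≠k} (x_k - x_l)`, hence
`⟨a_i, D b_j⟩ = (p_i q_j)^{-1/2} ∑_k (P_i Q_j)(x_k) / ∏_{l≠k} (x_k - x_l)`.
This sum is the coefficient of degree `M` in the polynomial of degree at most `M` interpolating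
`P_i Q_j` at the nodes, so it vanishes as soon as `i + j < M` (`sum_eval_mul_div_prod_eq_zero`).
Therefore the `M + 1` vectors `a_0, …, a_{m-1}, D b_0, …, D b_{M-m}` form an orthonormal basis of
`ℝ^{M+1}`, and the two projections `K_u^{(m)}` and `D K_v^{(M-m+1)} D` add up to the identity.
-/

open Finset

/-- The Christoffel–Darboux kernel
`K_w^{(m)}(x_k, x_l) = √(w(x_k) w(x_l)) ∑_{i=0}^{m-1} R_i(x_k) R_i(x_l)/r_i`,
viewed as an `(M+1) × (M+1)` matrix indexed by the points of `X`. -/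
noncomputable def cdKernelMatrix {M : ℕ} (x w : Fin (M + 1) → ℝ)
    (R : Fin (M + 1) → Polynomial ℝ) (r : Fin (M + 1) → ℝ) (m : ℕ) :
    Matrix (Fin (M + 1)) (Fin (M + 1)) ℝ :=
  Matrix.of fun k l =>
    Real.sqrt (w k * w l) *
      ∑ i ∈ Finset.univ.filter (fun i : Fin (M + 1) => (i : ℕ) < m),
        (R i).eval (x k) * (R i).eval (x l) / r i

/-- The coordinate at `x_k` of the normalized vector `(√(w(x_k)) R_i(x_k) / √r_i)_k`. -/
noncomputable def normalizedVec {M : ℕ} (x w : Fin (M + 1) → ℝ)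
    (R : Fin (M + 1) → Polynomial ℝ) (r : Fin (M + 1) → ℝ) (i k : Fin (M + 1)) : ℝ :=
  Real.sqrt (w k) * (R i).eval (x k) / Real.sqrt (r i)

lemma sum_normalizedVec_mul {M : ℕ} (x w : Fin (M + 1) → ℝ)
    (R : Fin (M + 1) → Polynomial ℝ) (r : Fin (M + 1) → ℝ)
    (hw : ∀ k, 0 < w k) (hr : ∀ i, 0 < r i)
    (horth : ∀ i j, ∑ k, (R i).eval (x k) * (R j).eval (x k) * w k
        = if i = j then r i else 0) (i j : Fin (M + 1)) :
    ∑ k, normalizedVec x w R r i k * normalizedVec x w R r j k = if i = j then 1 else 0 := by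
  have h : ∀ k, normalizedVec x w R r i k * normalizedVec x w R r j k
      = ((R i).eval (x k) * (R j).eval (x k) * w k) / (Real.sqrt (r i) * Real.sqrt (r j)) := by
    intro k
    rw [normalizedVec, normalizedVec, div_mul_div_comm]
    congr 1
    linear_combination (R i).eval (x k) * (R j).eval (x k) * Real.mul_self_sqrt (hw k).le
  simp_rw [h]
  rw [← Finset.sum_div, horth]
  split_ifs with hij
  · subst hij
    rw [Real.mul_self_sqrt (hr i).le, div_self (hr i).ne']
  · simp

/-- The kernel matrix is the sum of the rank-one projections onto the normalized vectors. -/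
lemma cdKernelMatrix_apply_eq {M : ℕ} (x w : Fin (M + 1) → ℝ)
    (R : Fin (M + 1) → Polynomial ℝ) (r : Fin (M + 1) → ℝ)
    (hw : ∀ k, 0 < w k) (hr : ∀ i, 0 < r i) (m : ℕ) (k l : Fin (M + 1)) :
    cdKernelMatrix x w R r m k l =
      ∑ i : Fin (M + 1), if (i : ℕ) < m then
        normalizedVec x w R r i k * normalizedVec x w R r i l else 0 := by
  rw [cdKernelMatrix, Matrix.of_apply, Finset.mul_sum, Finset.sum_filter]
  refine Finset.sum_congr rfl fun i _ => ?_
  split_ifs with hi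
  · rw [normalizedVec, normalizedVec, div_mul_div_comm, Real.mul_self_sqrt (hr i).le,
      Real.sqrt_mul (hw k).le]
    ring
  · rfl

/-- The divided difference at `M + 1` nodes kills a product of total degree less than `M`. -/
lemma sum_eval_mul_div_prod_eq_zero {M : ℕ} (x : Fin (M + 1) → ℝ) (hx : Function.Injective x)
    (f g : Polynomial ℝ) (a b : ℕ) (hf : f.degree = a) (hg : g.degree = b) (hab : a + b < M) :
    ∑ k, f.eval (x k) * g.eval (x k) / ∏ i ∈ Finset.univ.erase k, (x k - x i) = 0 := by
  have hdeg : (f * g).degree = ((a + b : ℕ) : WithBot ℕ) := by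
    rw [Polynomial.degree_mul, hf, hg]
    rfl
  have hcard : (Finset.univ : Finset (Fin (M + 1))).card = M + 1 := by simp
  have h := Lagrange.coeff_eq_sum (s := (Finset.univ : Finset (Fin (M + 1)))) (v := x)
    hx.injOn (P := f * g) (by rw [hdeg, hcard]; exact_mod_cast (by omega))
  simp only [Polynomial.eval_mul] at h
  rw [← h, hcard]
  refine Polynomial.coeff_eq_zero_of_degree_lt ?_
  rw [hdeg]
  exact_mod_cast (by omega)

lemma sign_mul_sqrt_mul_sqrt {a b c : ℝ} (ha : 0 < a) (hc : c ≠ 0) (h : a * b = 1 / c ^ 2) :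
    Real.sign c * (Real.sqrt a * Real.sqrt b) = 1 / c := by
  rw [← Real.sqrt_mul ha.le, h, Real.sqrt_div zero_le_one, Real.sqrt_one, Real.sqrt_sq_eq_abs]
  rcases lt_or_gt_of_ne hc with hlt | hgt
  · rw [Real.sign_of_neg hlt, abs_of_neg hlt]
    field_simp
  · rw [Real.sign_of_pos hgt, abs_of_pos hgt, one_mul]

/-- (Borodin, Theorem 5.) `K_u^{(m)} = D (I - K_v^{(M-m+1)}) D` where
`D = diag(ε(x_0), …, ε(x_M))` and `ε(x_k) = sgn ∏_{i≠k}(x_k - x_i)`. -/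
theorem kernel_duality
    (M : ℕ) (x : Fin (M + 1) → ℝ) (hx : Function.Injective x)
    (u v : Fin (M + 1) → ℝ) (hu : ∀ k, 0 < u k) (hv : ∀ k, 0 < v k)
    (huv : ∀ k, u k * v k = 1 / ∏ i ∈ Finset.univ.erase k, (x k - x i) ^ 2)
    (P Q : Fin (M + 1) → Polynomial ℝ) (p q : Fin (M + 1) → ℝ)
    (hPdeg : ∀ i, (P i).degree = (i : ℕ))
    (hQdeg : ∀ i, (Q i).degree = (i : ℕ))
    (hp : ∀ i, 0 < p i) (hq : ∀ i, 0 < q i)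
    (hPorth : ∀ i j, ∑ k, (P i).eval (x k) * (P j).eval (x k) * u k
        = if i = j then p i else 0)
    (hQorth : ∀ i j, ∑ k, (Q i).eval (x k) * (Q j).eval (x k) * v k
        = if i = j then q i else 0)
    (ε : Fin (M + 1) → ℝ)
    (hε : ∀ k, ε k = Real.sign (∏ i ∈ Finset.univ.erase k, (x k - x i)))
    (m : ℕ) (hm1 : 1 ≤ m) (hmM : m ≤ M) :
    cdKernelMatrix x u P p m
      = Matrix.diagonal ε * (1 - cdKernelMatrix x v Q q (M - m + 1))
          * Matrix.diagonal ε := by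
  have hprod : ∀ k, ∏ i ∈ Finset.univ.erase k, (x k - x i) ≠ 0 := by
    intro k
    refine Finset.prod_ne_zero_iff.2 fun i hi => sub_ne_zero.2 fun h => ?_
    exact (Finset.mem_erase.1 hi).1 (hx h).symm
  have hε2 : ∀ k, ε k * ε k = 1 := by
    intro k
    rw [hε]
    rcases Real.sign_apply_eq_of_ne_zero _ (hprod k) with h | h <;> rw [h] <;> norm_num
  have hεuv : ∀ k, ε k * (Real.sqrt (u k) * Real.sqrt (v k))
      = 1 / ∏ i ∈ Finset.univ.erase k, (x k - x i) := by
    intro k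
    rw [hε]
    exact sign_mul_sqrt_mul_sqrt (hu k) (hprod k) (by rw [huv, Finset.prod_pow])
  set a := normalizedVec x u P p with ha
  set b := normalizedVec x v Q q with hb
  have haa := sum_normalizedVec_mul x u P p hu hp hPorth
  have hbb := sum_normalizedVec_mul x v Q q hv hq hQorth
  rw [← ha] at haa
  rw [← hb] at hbb
  have hab : ∀ i j : Fin (M + 1), (i : ℕ) + j < M → ∑ k, a i k * (ε k * b j k) = 0 := by
    intro i j hij
    have h : ∀ k, a i k * (ε k * b j k) = ((P i).eval (x k) * (Q j).eval (x k)
        / ∏ i ∈ Finset.univ.erase k, (x k - x i)) / (Real.sqrt (p i) * Real.sqrt (q j)) := by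
      intro k
      rw [div_eq_mul_one_div (_ * _) (∏ i ∈ _, _), ← hεuv, ha, hb, normalizedVec, normalizedVec]
      ring
    simp_rw [h]
    rw [← Finset.sum_div, sum_eval_mul_div_prod_eq_zero x hx _ _ i j (hPdeg i) (hQdeg j) hij,
      zero_div]
  -- The rows of `C` are `a_0, …, a_{m-1}, D b_{M-m}, …, D b_0`.
  let C : Matrix (Fin (M + 1)) (Fin (M + 1)) ℝ :=
    Matrix.of fun i k => if (i : ℕ) < m then a i k else ε k * b i.rev k
  have hC : C * C.transpose = 1 := by
    ext i j
    simp only [C, Matrix.mul_apply, Matrix.transpose_apply, Matrix.of_apply, Matrix.one_apply]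
    have hi := i.isLt
    have hj := j.isLt
    by_cases him : (i : ℕ) < m <;> by_cases hjm : (j : ℕ) < m <;> simp only [him, hjm, if_true,
      if_false]
    · exact haa i j
    · rw [hab i j.rev (by rw [Fin.val_rev]; omega), if_neg (by rintro rfl; exact hjm him)]
    · simp_rw [mul_comm (ε _ * b _ _) (a _ _)]
      rw [hab j i.rev (by rw [Fin.val_rev]; omega), if_neg (by rintro rfl; exact him hjm)]
    · have h : ∀ k, ε k * b i.rev k * (ε k * b j.rev k) = b i.rev k * b j.rev k := by
        intro k
        linear_combination b i.rev k * b j.rev k * hε2 k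
      simp_rw [h]
      rw [hbb]
      simp only [Fin.rev_inj]
  have hC' : C.transpose * C = 1 := mul_eq_one_comm.1 hC
  ext k l
  have hkl := congrFun (congrFun hC' k) l
  rw [Matrix.mul_diagonal, Matrix.diagonal_mul, Matrix.sub_apply,
    cdKernelMatrix_apply_eq x u P p hu hp, cdKernelMatrix_apply_eq x v Q q hv hq, ← ha, ← hb]
  -- Reversing the index turns the condition `j < M - m + 1` into `m ≤ i`.
  have hrev : (∑ j : Fin (M + 1), if (j : ℕ) < M - m + 1 then b j k * b j l else 0)
      = ∑ i : Fin (M + 1), if (i : ℕ) < m then 0 else b i.rev k * b i.rev l := by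
    rw [← Equiv.sum_comp Fin.revPerm]
    refine Finset.sum_congr rfl fun i _ => ?_
    have hi := i.isLt
    rw [Fin.revPerm_apply, Fin.val_rev]
    by_cases him : (i : ℕ) < m
    · rw [if_pos him, if_neg (by omega)]
    · rw [if_neg him, if_pos (by omega)]
  have hsplit : (C.transpose * C) k l
      = (∑ i : Fin (M + 1), if (i : ℕ) < m then a i k * a i l else 0)
        + ε k * ε l * ∑ i : Fin (M + 1), if (i : ℕ) < m then 0 else b i.rev k * b i.rev l := by
    rw [Matrix.mul_apply, Finset.mul_sum, ← Finset.sum_add_distrib]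
    refine Finset.sum_congr rfl fun i _ => ?_
    simp only [C, Matrix.transpose_apply, Matrix.of_apply]
    split_ifs <;> ring
  have hone : ε k * (1 : Matrix (Fin (M + 1)) (Fin (M + 1)) ℝ) k l * ε l
      = (1 : Matrix (Fin (M + 1)) (Fin (M + 1)) ℝ) k l := by
    rw [Matrix.one_apply]
    split_ifs with h
    · subst h
      rw [mul_one, hε2]
    · simp
  rw [hsplit] at hkl
  rw [hrev]
  linear_combination hkl - hone
end

section
/- Let N be a positive integer and let α, β be real numbers with either α > −1 and β > −1, or α < −N and β < −N. For 0 ≤ n ≤ N define the Hahn polynomial value at an integer x ∈ {0,…,N} by H_n(x; α, β, N) = ∑_{k=0}^{n} [(−n)_k · (n+α+β+1)_k · (−x)_k] / [(α+1)_k · (−N)_k · k!], where (a)_k is the Pochhammer symbol. Then for all 0 ≤ n ≤ N and all x ∈ {0,…,N}: H_n(x; α, β, N) = [(−β−N)_x / (α+1)_x] · H_{N−n}(x; −β−N−1, −α−N−1, N). -/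
/-!
Both sides are terminating `₃F₂(1)` series, and the claim is the transformation
`₃F₂(-x, a, b; c, d; 1) = ((s)_x / (c)_x) ₃F₂(-x, d-a, d-b; s, d; 1)`, `s = c + d - a - b`,
at `a = -n`, `b = n + α + β + 1`, `c = α + 1`, `d = -N`, where `s = -β - N`.

To prove the transformation, put `e = d - a - b` and expand `(d-a)_m (d-b)_m` on the right by the
Pfaff–Saalschütz identity (`saalschutz`). After interchanging the sums, the coefficient of
`(a)_k (b)_k / (d)_k` is a Chu–Vandermonde sum (`vandermonde`), which evaluates to
`(-1)^k C(x,k) (c+k)_{x-k}`; this is the `k`-th term on the left multiplied by `(c)_x`.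
Both auxiliary identities are stated without denominators, so that they hold for all parameters.
-/

open Finset

/-- The Pochhammer symbol `(a)_k = a (a+1) ⋯ (a+k-1)`, with `(a)_0 = 1`. -/
noncomputable def poch (a : ℝ) (k : ℕ) : ℝ := (ascPochhammer ℝ k).eval a

/-- The Hahn polynomial value
`H_n(x; α, β, N) = ∑_{k=0}^n (-n)_k (n+α+β+1)_k (-x)_k / ((α+1)_k (-N)_k k!)
                 = ₃F₂(-n, n+α+β+1, -x; α+1, -N; 1)`. -/
noncomputable def hahn (N n x : ℕ) (α β : ℝ) : ℝ :=
  ∑ k ∈ Finset.range (n + 1),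
    (poch (-(n : ℝ)) k * poch ((n : ℝ) + α + β + 1) k * poch (-(x : ℝ)) k)
      / (poch (α + 1) k * poch (-(N : ℝ)) k * (Nat.factorial k : ℝ))

lemma poch_zero (a : ℝ) : poch a 0 = 1 := by simp [poch]

lemma poch_succ (a : ℝ) (k : ℕ) : poch a (k + 1) = poch a k * (a + k) := by
  simp [poch, ascPochhammer_succ_eval]

lemma poch_add (a : ℝ) (k l : ℕ) : poch a (k + l) = poch a k * poch (a + k) l := by
  induction l with
  | zero => simp [poch_zero]
  | succ l ih => rw [← add_assoc, poch_succ, ih, poch_succ]; push_cast; ring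

lemma poch_succ_left (a : ℝ) (k : ℕ) : poch a (k + 1) = a * poch (a + 1) k := by
  rw [add_comm k 1, poch_add]
  simp [poch]

lemma poch_ne_zero {a : ℝ} {k : ℕ} (h : ∀ i < k, a + (i : ℝ) ≠ 0) : poch a k ≠ 0 := by
  induction k with
  | zero => simp [poch_zero]
  | succ k ih =>
    rw [poch_succ]
    exact mul_ne_zero (ih fun i hi => h i (by omega)) (h k (by omega))

lemma poch_neg_nat (x k : ℕ) :
    poch (-(x : ℝ)) k = (-1) ^ k * (k.factorial : ℝ) * (x.choose k : ℝ) := by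
  induction k with
  | zero => simp [poch_zero]
  | succ k ih =>
    have h : (x.choose (k + 1) : ℝ) * (k + 1) = x.choose k * ((x : ℝ) - k) := by
      rcases le_or_gt k x with hk | hk
      · have := Nat.choose_succ_right_eq x k
        rw [← Nat.cast_sub hk]
        exact_mod_cast this
      · simp [Nat.choose_eq_zero_of_lt hk, Nat.choose_eq_zero_of_lt (Nat.lt_succ_of_lt hk)]
    rw [poch_succ, ih, Nat.factorial_succ]
    push_cast
    linear_combination (-1) ^ k * (k.factorial : ℝ) * h

/-- The Chu–Vandermonde identity in the denominator-free form
`∑_j (-1)^j C(n,j) (e)_j (s+j)_{n-j} = (s-e)_n`. -/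
lemma vandermonde (e : ℝ) (n : ℕ) (s : ℝ) :
    ∑ p ∈ antidiagonal n,
      (n.choose p.1 : ℝ) * ((-1) ^ p.1 * poch e p.1 * poch (s + p.1) p.2) = poch (s - e) n := by
  induction n generalizing s with
  | zero => simp [poch_zero]
  | succ n ih =>
    rw [Finset.sum_antidiagonal_choose_succ_mul
      (fun i j => (-1) ^ i * poch e i * poch (s + i) j) n, ← Finset.sum_add_distrib,
      poch_succ_left, show s - e + 1 = s + 1 - e by ring, ← ih, Finset.mul_sum]
    refine Finset.sum_congr rfl fun p hp => ?_
    rw [Nat.choose_symm_of_eq_add (mem_antidiagonal.mp hp).symm, poch_succ e, poch_succ_left,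
      show s + (p.1 : ℝ) + 1 = s + 1 + p.1 by ring,
      show s + ((p.1 + 1 : ℕ) : ℝ) = s + 1 + p.1 by push_cast; ring]
    ring

/-- Summand of the denominator-free Pfaff–Saalschütz sum, with `d = a + b + e`. -/
noncomputable def saalTerm (a b e : ℝ) (m k : ℕ) : ℝ :=
  (m.choose k : ℝ) * poch a k * poch b k * poch e (m - k) * poch (a + b + e + k) (m - k)

/-- The Gosper-summable recurrence in `m` satisfied by `saalTerm`; the right-hand side is the
telescoping certificate. -/
lemma saalTerm_partial_sum (a b e : ℝ) (m j : ℕ) (hj : j ≤ m) :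
    ∑ k ∈ range (j + 1),
      (saalTerm a b e (m + 1) k - (a + e + m) * (b + e + m) * saalTerm a b e m k)
    = -((m.choose j : ℝ) * poch a (j + 1) * poch b (j + 1) * poch e (m - j)
        * poch (a + b + e + j) (m - j)) := by
  induction j with
  | zero =>
    simp only [zero_add, sum_range_one, saalTerm, Nat.choose_zero_right, poch_zero, poch_succ,
      Nat.sub_zero]
    push_cast
    ring
  | succ j ih =>
    obtain ⟨l, rfl⟩ := Nat.exists_eq_add_of_le hj
    rw [sum_range_succ, ih (by omega)]
    have hc : ((j + 1 + l).choose (j + 1) : ℝ) * (j + 1) = (j + 1 + l).choose j * (l + 1) := by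
      have := Nat.choose_succ_right_eq (j + 1 + l) j
      rw [show j + 1 + l - j = l + 1 by omega] at this
      exact_mod_cast this
    have hp : ((j + 1 + l + 1).choose (j + 1) : ℝ)
        = (j + 1 + l).choose j + (j + 1 + l).choose (j + 1) := by
      exact_mod_cast Nat.choose_succ_succ _ _
    simp only [saalTerm]
    rw [show j + 1 + l - j = l + 1 by omega, show j + 1 + l + 1 - (j + 1) = l + 1 by omega,
      show j + 1 + l - (j + 1) = l by omega, hp, poch_succ_left (a + b + e + (j : ℝ)) l,
      poch_succ (a + b + e + ((j + 1 : ℕ) : ℝ)) l, poch_succ e l,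
      poch_succ a (j + 1), poch_succ b (j + 1),
      show a + b + e + (j : ℝ) + 1 = a + b + e + ((j + 1 : ℕ) : ℝ) by push_cast; ring]
    push_cast
    linear_combination (-(e + l) * poch a (j + 1) * poch b (j + 1) * poch e l
      * poch (a + b + e + (j + 1)) l) * hc

/-- The Pfaff–Saalschütz identity, free of denominators. -/
lemma saalschutz (a b e : ℝ) (m : ℕ) :
    ∑ k ∈ range (m + 1), saalTerm a b e m k = poch (b + e) m * poch (a + e) m := by
  induction m with
  | zero => simp [saalTerm, poch_zero]
  | succ m ih =>
    have h := saalTerm_partial_sum a b e m m le_rfl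
    rw [sum_sub_distrib, ← mul_sum, ih] at h
    rw [sum_range_succ, poch_succ, poch_succ]
    simp only [saalTerm, Nat.choose_self, Nat.sub_self, poch_zero] at h ⊢
    push_cast at h ⊢
    linear_combination h

/-- The terminating `₃F₂(1)` transformation, with `d = a + b + e` and `s = c + e`. -/
lemma transformation (a b c e : ℝ) (x : ℕ)
    (hc : ∀ k ≤ x, poch c k ≠ 0) (hd : ∀ k ≤ x, poch (a + b + e) k ≠ 0)
    (hs : ∀ k ≤ x, poch (c + e) k ≠ 0) :
    ∑ k ∈ range (x + 1), (-1) ^ k * (x.choose k : ℝ) * (poch a k * poch b k)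
        / (poch c k * poch (a + b + e) k)
      = poch (c + e) x / poch c x *
        ∑ m ∈ range (x + 1), (-1) ^ m * (x.choose m : ℝ) * (poch (b + e) m * poch (a + e) m)
          / (poch (c + e) m * poch (a + b + e) m) := by
  -- the summand of the double sum, indexed by `k` and `j = m - k`
  let f : ℕ → ℕ → ℝ := fun k j =>
    (-1) ^ k * (x.choose k : ℝ) * (poch a k * poch b k) / (poch c x * poch (a + b + e) k) *
      (((x - k).choose j : ℝ) * ((-1) ^ j * poch e j * poch (c + e + k + j) (x - k - j)))
  have hR : poch (c + e) x / poch c x *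
        ∑ m ∈ range (x + 1), (-1) ^ m * (x.choose m : ℝ) * (poch (b + e) m * poch (a + e) m)
          / (poch (c + e) m * poch (a + b + e) m)
      = ∑ m ∈ range (x + 1), ∑ k ∈ range (m + 1), f k (m - k) := by
    rw [mul_sum]
    refine sum_congr rfl fun m hm => ?_
    have hm : m ≤ x := by simpa [Nat.lt_succ_iff] using hm
    rw [← saalschutz, mul_sum, sum_div, mul_sum]
    refine sum_congr rfl fun k hk => ?_
    have hk : k ≤ m := by simpa [Nat.lt_succ_iff] using hk
    have h1 : (x.choose m : ℝ) * m.choose k = x.choose k * (x - k).choose (m - k) := by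
      exact_mod_cast Nat.choose_mul hk
    obtain ⟨j, rfl⟩ := Nat.exists_eq_add_of_le hk
    obtain ⟨l, rfl⟩ := Nat.exists_eq_add_of_le hm
    have hd' := hd _ hm
    have hs' := hs _ hm
    have hcx := hc _ le_rfl
    have hdk := hd k (hk.trans hm)
    simp only [f, saalTerm]
    rw [show k + j + l - k - (k + j - k) = l by omega, poch_add (c + e) (k + j) l]
    rw [show k + j - k = j by omega] at h1 ⊢
    rw [poch_add (a + b + e) k j] at hd' ⊢
    have hdj := right_ne_zero_of_mul hd'
    rw [show c + e + (k : ℝ) + j = c + e + ((k + j : ℕ) : ℝ) by push_cast; ring]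
    field_simp
    rw [pow_add]
    linear_combination ((-1) ^ k * (-1) ^ j * poch a k * poch b k * poch e j *
      poch (c + e + ((k + j : ℕ) : ℝ)) l) * h1
  rw [hR, sum_range_diag_flip]
  refine sum_congr rfl fun k hk => ?_
  have hk : k ≤ x := by simpa [Nat.lt_succ_iff] using hk
  simp only [f]
  rw [← mul_sum, show x + 1 - k = (x - k) + 1 by omega,
    ← Finset.Nat.sum_antidiagonal_eq_sum_range_succ
      (fun i j => ((x - k).choose i : ℝ) * ((-1) ^ i * poch e i * poch (c + e + k + i) j)),
    vandermonde, show c + e + (k : ℝ) - e = c + k by ring]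
  have hcx := hc x le_rfl
  have hck := hc k hk
  have hdk := hd k hk
  obtain ⟨l, rfl⟩ := Nat.exists_eq_add_of_le hk
  rw [poch_add c k l] at hcx ⊢
  have hcl := right_ne_zero_of_mul hcx
  rw [show k + l - k = l by omega]
  field_simp

/-- Since `(-n)_k = 0` for `k > n` and `(-x)_k = 0` for `k > x`, the Hahn sum may be taken over
`k ≤ x` instead of `k ≤ n`. -/
lemma hahn_eq (N n x : ℕ) (α β : ℝ) :
    hahn N n x α β = ∑ k ∈ range (x + 1), (-1) ^ k * (x.choose k : ℝ) *
      (poch (-(n : ℝ)) k * poch ((n : ℝ) + α + β + 1) k)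
        / (poch (α + 1) k * poch (-(N : ℝ)) k) := by
  have key : ∀ k, (poch (-(n : ℝ)) k * poch ((n : ℝ) + α + β + 1) k * poch (-(x : ℝ)) k)
      / (poch (α + 1) k * poch (-(N : ℝ)) k * (Nat.factorial k : ℝ))
      = (-1) ^ k * (x.choose k : ℝ) * (poch (-(n : ℝ)) k * poch ((n : ℝ) + α + β + 1) k)
        / (poch (α + 1) k * poch (-(N : ℝ)) k) := fun k => by
    have hk : (k.factorial : ℝ) ≠ 0 := by exact_mod_cast k.factorial_ne_zero
    rw [poch_neg_nat x k, ← mul_div_mul_right _ (poch (α + 1) k * poch (-(N : ℝ)) k) hk]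
    congr 1
    ring
  unfold hahn
  rw [sum_congr rfl fun k _ => key k]
  trans ∑ k ∈ range (max n x + 1), (-1) ^ k * (x.choose k : ℝ) *
      (poch (-(n : ℝ)) k * poch ((n : ℝ) + α + β + 1) k)
        / (poch (α + 1) k * poch (-(N : ℝ)) k)
  · refine sum_subset (range_subset_range.2 (by omega)) fun k _ hk => ?_
    have hk : n < k := by simpa using hk
    rw [poch_neg_nat n k, Nat.choose_eq_zero_of_lt hk]
    simp
  · refine (sum_subset (range_subset_range.2 (by omega)) fun k _ hk => ?_).symm
    have hk : x < k := by simpa using hk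
    rw [Nat.choose_eq_zero_of_lt hk]
    simp

/-- Duality of Hahn polynomials:
`H_n(x; α, β, N) = ((-β-N)_x / (α+1)_x) H_{N-n}(x; -β-N-1, -α-N-1, N)`. -/
theorem hahn_duality
    (N : ℕ) (hN : 0 < N) (α β : ℝ)
    (hαβ : (α > -1 ∧ β > -1) ∨ (α < -(N : ℝ) ∧ β < -(N : ℝ)))
    (n : ℕ) (hn : n ≤ N) (x : ℕ) (hx : x ≤ N) :
    hahn N n x α β
      = (poch (-β - (N : ℝ)) x / poch (α + 1) x)
          * hahn N (N - n) x (-β - (N : ℝ) - 1) (-α - (N : ℝ) - 1) := by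
  have hcast : ∀ k ≤ x, ∀ i < k, (i : ℝ) + 1 ≤ N := fun k hk i hi => by
    exact_mod_cast (by omega : i + 1 ≤ N)
  have hc : ∀ k ≤ x, poch (α + 1) k ≠ 0 := fun k hk => poch_ne_zero fun i hi => by
    have h1 := hcast k hk i hi
    have h2 : (0 : ℝ) ≤ i := i.cast_nonneg
    rcases hαβ with h | h
    · exact ne_of_gt (by linarith [h.1])
    · exact ne_of_lt (by linarith [h.1])
  have hs : ∀ k ≤ x, poch (-β - (N : ℝ)) k ≠ 0 := fun k hk => poch_ne_zero fun i hi => by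
    have h1 := hcast k hk i hi
    have h2 : (0 : ℝ) ≤ i := i.cast_nonneg
    rcases hαβ with h | h
    · exact ne_of_lt (by linarith [h.2])
    · exact ne_of_gt (by linarith [h.2])
  have hd : ∀ k ≤ x, poch (-(N : ℝ)) k ≠ 0 := fun k hk => poch_ne_zero fun i hi => by
    have h1 := hcast k hk i hi
    exact ne_of_lt (by linarith)
  have e1 : -(n : ℝ) + ((n : ℝ) + α + β + 1) + (-N - α - β - 1) = -N := by ring
  have e2 : α + 1 + (-N - α - β - 1) = -β - (N : ℝ) := by ring
  have t := transformation (-(n : ℝ)) ((n : ℝ) + α + β + 1) (α + 1) (-N - α - β - 1) x hc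
    (by rwa [e1]) (by rwa [e2])
  rw [e1, e2] at t
  rw [hahn_eq, hahn_eq, t, Nat.cast_sub hn]
  congr 1
  refine sum_congr rfl fun k _ => ?_
  ring_nf
end
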